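/- Let α > 0. The kernel of the Riemann–Liouville fractional derivative D^α on X_α is exactly the span of {t^{α−⌈α⌉}, …, t^{α−2}, t^{α−1}}: for f ∈ X_α, D^α f = 0 almost everywhere on [0,b] if and only if f is a linear combination of t^{α−⌈α⌉}, …, t^{α−1}. In particular, ker D^α is a vector space of dimension ⌈α⌉. -/

import Mathlib

open MeasureTheory Set Filter Topology

open Classical in
/-- Riemann–Liouville fractional integral of order `α` with base point `0`;
`RL 0` is the identity operator. -/
noncomputable def RL (α : ℝ) (f : ℝ → ℝ) : ℝ → ℝ := fun t =>
  if α = 0 then f t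
  else (1 / Real.Gamma α) * ∫ s in (0:ℝ)..t, (t - s) ^ (α - 1) * f s

/-- `g ∈ AC[0,b]`: `g t = g 0 + ∫₀ᵗ φ` for some `φ ∈ L¹[0,b]`. -/
def MemAC (b : ℝ) (g : ℝ → ℝ) : Prop :=
  ∃ φ : ℝ → ℝ, IntegrableOn φ (Set.Icc 0 b) volume ∧
    ∀ t ∈ Set.Icc (0:ℝ) b, g t = g 0 + ∫ s in (0:ℝ)..t, φ s

/-- `g ∈ AC^n[0,b]`: `g ∈ C^{n-1}[0,b]` and `D^{n-1} g ∈ AC[0,b]`. -/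
def MemACn (b : ℝ) (n : ℕ) (g : ℝ → ℝ) : Prop :=
  ContDiffOn ℝ (n - 1 : ℕ) g (Set.Icc 0 b) ∧
    MemAC b (iteratedDerivWithin (n - 1) g (Set.Icc 0 b))

/-- `f ∈ X_α`, the space of functions with summable fractional derivative of order `α`:
`f ∈ L¹[0,b]` and (for `α ≠ 0`) `I^{⌈α⌉-α} f ∈ AC^{⌈α⌉}[0,b]`
(as an element of `L¹`, i.e. it has an `AC^{⌈α⌉}` representative); `X_0 = L¹[0,b]`. -/
def MemX (b : ℝ) (α : ℝ) (f : ℝ → ℝ) : Prop :=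
  IntegrableOn f (Set.Icc 0 b) volume ∧
    (α ≠ 0 → ∃ g : ℝ → ℝ,
      g =ᵐ[volume.restrict (Set.Icc 0 b)] RL ((⌈α⌉₊ : ℝ) - α) f ∧ MemACn b ⌈α⌉₊ g)

/-- `φ` is the Riemann–Liouville fractional derivative of order `α` of `f`,
i.e. `D^α f = D^{⌈α⌉}(I^{⌈α⌉-α} f) = φ`, the last derivative taken in the weak sense:
`D^{⌈α⌉-1}` of (the `AC^{⌈α⌉}` representative of) `I^{⌈α⌉-α} f` is an antiderivative of `φ`.
`D^0 = Id`. -/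
def IsRLDeriv (b : ℝ) (α : ℝ) (f φ : ℝ → ℝ) : Prop :=
  IntegrableOn φ (Set.Icc 0 b) volume ∧
    ((α = 0 ∧ φ =ᵐ[volume.restrict (Set.Icc 0 b)] f) ∨
     (α ≠ 0 ∧ ∃ g : ℝ → ℝ,
        g =ᵐ[volume.restrict (Set.Icc 0 b)] RL ((⌈α⌉₊ : ℝ) - α) f ∧
        MemACn b ⌈α⌉₊ g ∧
        ∀ t ∈ Set.Icc (0:ℝ) b,
          iteratedDerivWithin (⌈α⌉₊ - 1) g (Set.Icc 0 b) t =
            iteratedDerivWithin (⌈α⌉₊ - 1) g (Set.Icc 0 b) 0 + ∫ s in (0:ℝ)..t, φ s))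

/-!
`I^β` is one-sided convolution with `k_β(t) = t^(β-1) / Γ(β)`, and `k_β ⋆ k_γ = k_(β+γ)` by Euler's
Beta integral, so `I^γ I^β = I^(β+γ)`. Hence `I^β` is injective on `L¹`: composing with
`I^(⌈β⌉-β)` reduces this to integer orders, i.e. to Lebesgue differentiation. With `n = ⌈α⌉`,
`D^α f = 0` means that `I^(n-α) f` is a polynomial of degree `< n`. Such a polynomial is
`∑ a_i k_(i+1) = I^(n-α) (∑ a_i k_(i+1-n+α))` with `0 ≤ i < n`, and injectivity gives
`f = ∑ a_i k_(i+1-n+α)`.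
-/

section IteratedDeriv

theorem eqOn_taylorWithinEval_of_iteratedDerivWithin_eq {E : Type*} [NormedAddCommGroup E]
    [NormedSpace ℝ E] {g : ℝ → E} {a b : ℝ} {m : ℕ} (hab : a < b)
    (hg : ContDiffOn ℝ m g (Icc a b))
    (hconst : ∀ t ∈ Icc a b,
      iteratedDerivWithin m g (Icc a b) t = iteratedDerivWithin m g (Icc a b) a) :
    EqOn g (taylorWithinEval g m (Icc a b) a) (Icc a b) := by
  have hunique : UniqueDiffOn ℝ (Icc a b) := uniqueDiffOn_Icc hab
  have hsmooth : ContDiffOn ℝ (m + 1 : ℕ) g (Icc a b) :=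
    (contDiffOn_nat_succ_iff_contDiffOn_one_iteratedDerivWithin hunique).2
      ⟨hg, contDiffOn_const.congr hconst⟩
  have hzero : ∀ t ∈ Icc a b, ‖iteratedDerivWithin (m + 1) g (Icc a b) t‖ ≤ 0 := by
    intro t ht
    rw [iteratedDerivWithin_succ, derivWithin_congr hconst (hconst t ht), derivWithin_fun_const]
    simp
  intro t ht
  have hbound := taylor_mean_remainder_bound hab.le (mod_cast hsmooth) ht hzero
  rw [zero_mul, zero_div] at hbound
  exact sub_eq_zero.1 (norm_le_zero_iff.1 hbound)

theorem iteratedDeriv_sum_range_succ_eq (m : ℕ) (a : ℕ → ℝ) (x y : ℝ) :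
    iteratedDeriv m (fun t => ∑ i ∈ Finset.range (m + 1), a i * t ^ i) x =
      iteratedDeriv m (fun t => ∑ i ∈ Finset.range (m + 1), a i * t ^ i) y := by
  have hsum (z : ℝ) : iteratedDeriv m (fun t => ∑ i ∈ Finset.range (m + 1), a i * t ^ i) z =
      ∑ i ∈ Finset.range (m + 1), a i * (i.descFactorial m * z ^ (i - m)) := by
    rw [iteratedDeriv_fun_sum fun i _ => by fun_prop]
    simp only [iteratedDeriv_const_mul_field, iteratedDeriv_pow]
  rw [hsum, hsum]
  refine Finset.sum_congr rfl fun i hi => ?_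
  rw [Nat.sub_eq_zero_of_le (Finset.mem_range_succ_iff.1 hi), pow_zero, pow_zero]

theorem iteratedDerivWithin_sum_range_succ_eq {s : Set ℝ} (hs : UniqueDiffOn ℝ s) (m : ℕ)
    (a : ℕ → ℝ) {x y : ℝ} (hx : x ∈ s) (hy : y ∈ s) :
    iteratedDerivWithin m (fun t => ∑ i ∈ Finset.range (m + 1), a i * t ^ i) s x =
      iteratedDerivWithin m (fun t => ∑ i ∈ Finset.range (m + 1), a i * t ^ i) s y := by
  rw [iteratedDerivWithin_eq_iteratedDeriv hs (by fun_prop) hx,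
    iteratedDerivWithin_eq_iteratedDeriv hs (by fun_prop) hy, iteratedDeriv_sum_range_succ_eq]

end IteratedDeriv

theorem ae_eq_of_integral_ae_eq {E : Type*} [NormedAddCommGroup E] [NormedSpace ℝ E]
    [CompleteSpace E] {f h : ℝ → E} {a b : ℝ} (hf : IntegrableOn f (Ioo a b))
    (hh : IntegrableOn h (Ioo a b))
    (heq : (fun t => ∫ s in a..t, f s) =ᵐ[volume.restrict (Ioo a b)] fun t => ∫ s in a..t, h s) :
    f =ᵐ[volume.restrict (Ioo a b)] h := by
  rcases le_or_gt b a with hba | hab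
  · simp [Ioo_eq_empty hba.not_gt, EventuallyEq]
  have interval {u : ℝ → E} (hu : IntegrableOn u (Ioo a b)) : IntervalIntegrable u volume a b :=
    (intervalIntegrable_iff_integrableOn_Ioo_of_le hab.le).2 hu
  have hcont {u : ℝ → E} (hu : IntegrableOn u (Ioo a b)) :
      ContinuousOn (fun t => ∫ s in a..t, u s) (Ioo a b) :=
    (intervalIntegral.continuousOn_primitive_interval' (interval hu) left_mem_uIcc).mono
      (Ioo_subset_Icc_self.trans Icc_subset_uIcc)
  have hprim : EqOn (fun t => ∫ s in a..t, f s) (fun t => ∫ s in a..t, h s) (Ioo a b) :=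
    Measure.eqOn_open_of_ae_eq heq isOpen_Ioo (hcont hf) (hcont hh)
  filter_upwards [ae_restrict_of_ae (interval hf).ae_hasDerivAt_integral,
    ae_restrict_of_ae (interval hh).ae_hasDerivAt_integral,
    ae_restrict_mem measurableSet_Ioo] with t hft hht ht
  have ht' : t ∈ uIcc a b := Icc_subset_uIcc (Ioo_subset_Icc_self ht)
  exact (hft ht' a left_mem_uIcc).unique ((hht ht' a left_mem_uIcc).congr_of_eventuallyEq
    (hprim.eventuallyEq_of_mem (isOpen_Ioo.mem_nhds ht)))

theorem coeff_eq_zero_of_sum_rpow_ae_eq_zero {ι : Type*} {s : Finset ι} {p c : ι → ℝ} {b : ℝ}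
    (hb : 0 < b) (hp : InjOn p s)
    (h : (fun t => ∑ k ∈ s, c k * t ^ p k) =ᵐ[volume.restrict (Ioo 0 b)] fun _ => 0) :
    ∀ k ∈ s, c k = 0 := by
  classical
  have hzero : EqOn (fun t => ∑ k ∈ s, c k * t ^ p k) (fun _ => 0) (Ioo 0 b) := by
    refine Measure.eqOn_open_of_ae_eq h isOpen_Ioo ?_ continuousOn_const
    exact continuousOn_finsetSum _ fun k _ => continuousOn_const.mul
      (continuousOn_id.rpow_const fun t ht => Or.inl ht.1.ne')
  by_contra! ⟨k₁, hk₁, hck₁⟩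
  obtain ⟨k₀, hk₀, hmin⟩ := (s.filter (c · ≠ 0)).exists_min_image p
    ⟨k₁, Finset.mem_filter.2 ⟨hk₁, hck₁⟩⟩
  rw [Finset.mem_filter] at hk₀
  -- Divided by the lowest occurring power, the sum tends to the coefficient of that power.
  have hlim : Tendsto (fun t => ∑ k ∈ s, c k * t ^ (p k - p k₀)) (𝓝[>] 0) (𝓝 (c k₀)) := by
    rw [← Finset.sum_ite_eq_of_mem' s k₀ c hk₀.1]
    refine tendsto_finsetSum _ fun k hk => ?_
    rcases eq_or_ne k k₀ with rfl | hne
    · simp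
    rcases eq_or_ne (c k) 0 with hck | hck
    · simp [hck, hne]
    have hlt : 0 < p k - p k₀ :=
      sub_pos.2 ((hmin k (Finset.mem_filter.2 ⟨hk, hck⟩)).lt_of_ne' (hp.ne hk hk₀.1 hne))
    have := (Real.continuousAt_rpow_const 0 _ (Or.inr hlt.le)).tendsto.const_mul (c k)
    simpa [hne, Real.zero_rpow hlt.ne'] using this.mono_left nhdsWithin_le_nhds
  refine hk₀.2 (tendsto_nhds_unique (hlim.congr' ?_) tendsto_const_nhds)
  filter_upwards [Ioo_mem_nhdsGT hb] with t ht
  have hsum : ∑ k ∈ s, c k * t ^ p k = 0 := hzero ht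
  simp only [Real.rpow_sub ht.1, mul_div_assoc', ← Finset.sum_div]
  rw [hsum, zero_div]

section FractionalIntegral

local notation:67 u:67 "⋆₊" v:68 => posConvolution u v (ContinuousLinearMap.mul ℝ ℝ) volume

section PosConvolution

variable {u v w u' v' : ℝ → ℝ} {b t : ℝ}

theorem posConvolution_apply_of_pos (ht : 0 < t) :
    (u ⋆₊ v) t = ∫ s in 0..t, u s * v (t - s) :=
  indicator_of_mem (mem_Ioi.2 ht) _

theorem posConvolution_assoc_ae_eq (hu : IntegrableOn u (Ioi 0)) (hv : IntegrableOn v (Ioi 0))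
    (hw : IntegrableOn w (Ioi 0)) : (u ⋆₊ v) ⋆₊ w =ᵐ[volume] u ⋆₊ (v ⋆₊ w) := by
  have indicator_self (u v : ℝ → ℝ) : (Ioi 0).indicator (u ⋆₊ v) = u ⋆₊ v := by
    rw [posConvolution, indicator_indicator, inter_self]
  rw [posConvolution_eq_convolution_indicator (u ⋆₊ v) w _ volume, indicator_self,
    posConvolution_eq_convolution_indicator u (v ⋆₊ w) _ volume, indicator_self,
    posConvolution_eq_convolution_indicator u v _ volume,
    posConvolution_eq_convolution_indicator v w _ volume]
  rw [← integrable_indicator_iff measurableSet_Ioi] at hu hv hw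
  filter_upwards [hu.norm.ae_convolution_exists (ContinuousLinearMap.mul ℝ ℝ)
    (hv.norm.integrable_convolution (ContinuousLinearMap.mul ℝ ℝ) hw.norm)] with t ht
  exact convolution_assoc _ _ _ _ (by simp [mul_assoc]) hu.aestronglyMeasurable
    hv.aestronglyMeasurable hw.aestronglyMeasurable (hu.ae_convolution_exists _ hv)
    (hv.norm.ae_convolution_exists _ hw.norm) ht

theorem posConvolution_eqOn_Ioo (hu : u =ᵐ[volume.restrict (Ioo 0 b)] u')
    (hv : EqOn v v' (Ioo 0 b)) : EqOn (u ⋆₊ v) (u' ⋆₊ v') (Ioo 0 b) := by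
  intro t ht
  rw [posConvolution_apply_of_pos ht.1, posConvolution_apply_of_pos ht.1]
  simp only [intervalIntegral.integral_of_le ht.1.le, integral_Ioc_eq_integral_Ioo]
  refine integral_congr_ae ?_
  filter_upwards [ae_restrict_of_ae_restrict_of_subset (Ioo_subset_Ioo_right ht.2.le) hu,
    ae_restrict_mem measurableSet_Ioo] with s hus hs
  rw [hus, hv ⟨sub_pos.2 hs.2, by linarith [hs.1, ht.2]⟩]

theorem integrableOn_Ioi_indicator_Iio_iff :
    IntegrableOn ((Iio b).indicator u) (Ioi 0) ↔ IntegrableOn u (Ioo 0 b) := by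
  rw [integrableOn_indicator_iff measurableSet_Iio, inter_comm, Ioi_inter_Iio]

theorem eqOn_Ioo_indicator_Iio : EqOn u ((Iio b).indicator u) (Ioo 0 b) :=
  fun _ ht => (indicator_of_mem (mem_Iio.2 ht.2) u).symm

theorem integrableOn_posConvolution (hu : IntegrableOn u (Ioo 0 b))
    (hv : IntegrableOn v (Ioo 0 b)) : IntegrableOn (u ⋆₊ v) (Ioo 0 b) := by
  have htrunc := integrable_posConvolution (integrableOn_Ioi_indicator_Iio_iff.2 hu)
    (integrableOn_Ioi_indicator_Iio_iff.2 hv) (ContinuousLinearMap.mul ℝ ℝ)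
  refine htrunc.integrableOn.congr_fun (EqOn.symm ?_) measurableSet_Ioo
  exact posConvolution_eqOn_Ioo (eqOn_Ioo_indicator_Iio.aeEq_restrict measurableSet_Ioo)
    eqOn_Ioo_indicator_Iio

theorem posConvolution_assoc_ae_eq_Ioo (hu : IntegrableOn u (Ioo 0 b))
    (hv : IntegrableOn v (Ioo 0 b)) (hw : IntegrableOn w (Ioo 0 b)) :
    (u ⋆₊ v) ⋆₊ w =ᵐ[volume.restrict (Ioo 0 b)] u ⋆₊ (v ⋆₊ w) := by
  have hassoc := posConvolution_assoc_ae_eq (integrableOn_Ioi_indicator_Iio_iff.2 hu)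
    (integrableOn_Ioi_indicator_Iio_iff.2 hv) (integrableOn_Ioi_indicator_Iio_iff.2 hw)
  have trunc (u : ℝ → ℝ) : u =ᵐ[volume.restrict (Ioo 0 b)] (Iio b).indicator u :=
    eqOn_Ioo_indicator_Iio.aeEq_restrict measurableSet_Ioo
  filter_upwards [ae_restrict_of_ae hassoc, ae_restrict_mem measurableSet_Ioo] with t ht htb
  rw [posConvolution_eqOn_Ioo ((posConvolution_eqOn_Ioo (trunc u)
      eqOn_Ioo_indicator_Iio).aeEq_restrict measurableSet_Ioo) eqOn_Ioo_indicator_Iio htb, ht,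
    posConvolution_eqOn_Ioo (trunc u) (posConvolution_eqOn_Ioo (trunc v)
      eqOn_Ioo_indicator_Iio) htb]

end PosConvolution

theorem integral_rpow_mul_sub_rpow {p q t : ℝ} (hp : 0 < p) (hq : 0 < q) (ht : 0 < t) :
    ∫ x in 0..t, x ^ (p - 1) * (t - x) ^ (q - 1) =
      t ^ (p + q - 1) * (Real.Gamma p * Real.Gamma q / Real.Gamma (p + q)) := by
  have hbeta := Complex.betaIntegral_scaled p q ht
  rw [Complex.betaIntegral_eq_Gamma_mul_div _ _ (by simpa) (by simpa)] at hbeta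
  have hreal : ∫ x in 0..t, (x : ℂ) ^ ((p : ℂ) - 1) * ((t : ℂ) - x) ^ ((q : ℂ) - 1) =
      ∫ x in 0..t, ((x ^ (p - 1) * (t - x) ^ (q - 1) : ℝ) : ℂ) := by
    refine intervalIntegral.integral_congr fun x hx => ?_
    rw [uIcc_of_le ht.le] at hx
    push_cast [Complex.ofReal_cpow hx.1, Complex.ofReal_cpow (sub_nonneg.2 hx.2)]
    rfl
  have hpow : (t : ℂ) ^ ((p : ℂ) + q - 1) = ((t ^ (p + q - 1) : ℝ) : ℂ) := by
    push_cast [Complex.ofReal_cpow ht.le]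
    rfl
  rw [hreal, hpow, intervalIntegral.integral_ofReal, ← Complex.ofReal_add, Complex.Gamma_ofReal,
    Complex.Gamma_ofReal, Complex.Gamma_ofReal] at hbeta
  exact_mod_cast hbeta

/-- The kernel `t ^ (β - 1) / Γ(β)` whose one-sided convolution with `f` is the
Riemann–Liouville integral of `f` of order `β`. With this normalization the kernels form a
convolution semigroup, and `fracKernel (i + 1)` is the Taylor monomial `t ^ i / i!`. -/
noncomputable def fracKernel (β t : ℝ) : ℝ := t ^ (β - 1) / Real.Gamma β

section FracKernel

theorem fracKernel_natCast_add_one (i : ℕ) (t : ℝ) :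
    fracKernel (i + 1) t = t ^ i / i.factorial := by
  rw [fracKernel, add_sub_cancel_right, Real.rpow_natCast, Real.Gamma_nat_eq_factorial]

theorem integrableOn_fracKernel {β : ℝ} (hβ : 0 < β) (b : ℝ) :
    IntegrableOn (fracKernel β) (Ioo 0 b) :=
  ((intervalIntegral.intervalIntegrable_rpow' (by linarith)).1.mono_set
    Ioo_subset_Ioc_self).div_const _

variable {β γ t : ℝ}

theorem fracKernel_posConvolution_fracKernel (hβ : 0 < β) (hγ : 0 < γ) (ht : 0 < t) :
    (fracKernel β ⋆₊ fracKernel γ) t = fracKernel (β + γ) t := by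
  have hΓβ := (Real.Gamma_pos_of_pos hβ).ne'
  have hΓγ := (Real.Gamma_pos_of_pos hγ).ne'
  rw [posConvolution_apply_of_pos ht]
  simp only [fracKernel, div_mul_div_comm, intervalIntegral.integral_div]
  rw [integral_rpow_mul_sub_rpow hβ hγ ht]
  field_simp

theorem intervalIntegrable_fracKernel_mul (hβ : 0 < β) (hγ : 0 < γ) (ht : 0 < t) :
    IntervalIntegrable (fun s => fracKernel β s * fracKernel γ (t - s)) volume 0 t := by
  apply intervalIntegral.intervalIntegrable_of_integral_ne_zero
  rw [← posConvolution_apply_of_pos ht, fracKernel_posConvolution_fracKernel hβ hγ ht]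
  exact (div_pos (Real.rpow_pos_of_pos ht _) (Real.Gamma_pos_of_pos (add_pos hβ hγ))).ne'

end FracKernel

section RL

variable {f h : ℝ → ℝ} {b β γ t : ℝ}

theorem RL_zero (f : ℝ → ℝ) : RL 0 f = f := by
  ext t
  exact if_pos rfl

theorem RL_one (f : ℝ → ℝ) : RL 1 f = fun t => ∫ s in 0..t, f s := by
  ext t
  simp [RL]

theorem RL_eq_posConvolution (hβ : β ≠ 0) (f : ℝ → ℝ) (ht : 0 < t) :
    RL β f t = (f ⋆₊ fracKernel β) t := by
  rw [posConvolution_apply_of_pos ht, RL, if_neg hβ, ← intervalIntegral.integral_const_mul]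
  congr 1 with s
  rw [fracKernel]
  ring

theorem RL_eqOn_posConvolution (hβ : β ≠ 0) (f : ℝ → ℝ) :
    EqOn (RL β f) (f ⋆₊ fracKernel β) (Ioo 0 b) :=
  fun _ ht => RL_eq_posConvolution hβ f ht.1

theorem RL_congr_ae (β : ℝ) (hfh : f =ᵐ[volume.restrict (Ioo 0 b)] h) :
    RL β f =ᵐ[volume.restrict (Ioo 0 b)] RL β h := by
  rcases eq_or_ne β 0 with rfl | hβ
  · rwa [RL_zero, RL_zero]
  refine EqOn.aeEq_restrict (fun t ht => ?_) measurableSet_Ioo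
  rw [RL_eqOn_posConvolution hβ f ht, RL_eqOn_posConvolution hβ h ht,
    posConvolution_eqOn_Ioo hfh (eqOn_refl _ _) ht]

theorem integrableOn_RL (hβ : 0 ≤ β) (hf : IntegrableOn f (Ioo 0 b)) :
    IntegrableOn (RL β f) (Ioo 0 b) := by
  rcases hβ.eq_or_lt' with rfl | hβ
  · rwa [RL_zero]
  exact (integrableOn_posConvolution hf (integrableOn_fracKernel hβ b)).congr_fun
    (RL_eqOn_posConvolution hβ.ne' f).symm measurableSet_Ioo

theorem RL_RL_ae_eq (hβ : 0 ≤ β) (hγ : 0 ≤ γ) (hf : IntegrableOn f (Ioo 0 b)) :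
    RL γ (RL β f) =ᵐ[volume.restrict (Ioo 0 b)] RL (β + γ) f := by
  rcases hβ.eq_or_lt' with rfl | hβ
  · rw [RL_zero, zero_add]
  rcases hγ.eq_or_lt' with rfl | hγ
  · rw [RL_zero, add_zero]
  have hRL := (RL_eqOn_posConvolution (b := b) hβ.ne' f).aeEq_restrict (μ := volume)
    measurableSet_Ioo
  filter_upwards [posConvolution_assoc_ae_eq_Ioo hf (integrableOn_fracKernel hβ b)
    (integrableOn_fracKernel hγ b), ae_restrict_mem measurableSet_Ioo] with t hassoc ht
  calc RL γ (RL β f) t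
      = (RL β f ⋆₊ fracKernel γ) t := RL_eqOn_posConvolution hγ.ne' _ ht
    _ = ((f ⋆₊ fracKernel β) ⋆₊ fracKernel γ) t := posConvolution_eqOn_Ioo hRL (eqOn_refl _ _) ht
    _ = (f ⋆₊ (fracKernel β ⋆₊ fracKernel γ)) t := hassoc
    _ = (f ⋆₊ fracKernel (β + γ)) t := posConvolution_eqOn_Ioo .rfl
        (fun _ hs => fracKernel_posConvolution_fracKernel hβ hγ hs.1) ht
    _ = RL (β + γ) f t := (RL_eqOn_posConvolution (add_pos hβ hγ).ne' f ht).symm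

theorem ae_eq_of_RL_natCast_ae_eq (hf : IntegrableOn f (Ioo 0 b)) (hh : IntegrableOn h (Ioo 0 b))
    (m : ℕ) (heq : RL m f =ᵐ[volume.restrict (Ioo 0 b)] RL m h) :
    f =ᵐ[volume.restrict (Ioo 0 b)] h := by
  induction m with
  | zero => simpa only [Nat.cast_zero, RL_zero] using heq
  | succ m ih =>
    refine ih (ae_eq_of_integral_ae_eq (integrableOn_RL m.cast_nonneg hf)
      (integrableOn_RL m.cast_nonneg hh) ?_)
    rw [← RL_one, ← RL_one]
    rw [Nat.cast_succ] at heq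
    exact (RL_RL_ae_eq m.cast_nonneg zero_le_one hf).trans
      (heq.trans (RL_RL_ae_eq m.cast_nonneg zero_le_one hh).symm)

theorem ae_eq_of_RL_ae_eq (hβ : 0 ≤ β) (hf : IntegrableOn f (Ioo 0 b))
    (hh : IntegrableOn h (Ioo 0 b)) (heq : RL β f =ᵐ[volume.restrict (Ioo 0 b)] RL β h) :
    f =ᵐ[volume.restrict (Ioo 0 b)] h := by
  have hγ : 0 ≤ (⌈β⌉₊ : ℝ) - β := sub_nonneg.2 (Nat.le_ceil β)
  have key := (RL_RL_ae_eq hβ hγ hf).symm.trans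
    ((RL_congr_ae _ heq).trans (RL_RL_ae_eq hβ hγ hh))
  rw [add_sub_cancel] at key
  exact ae_eq_of_RL_natCast_ae_eq hf hh _ key

theorem RL_sum_fracKernel {ι : Type*} {s : Finset ι} {p : ι → ℝ} (hβ : 0 ≤ β)
    (hp : ∀ i ∈ s, 0 < p i) (a : ι → ℝ) (ht : 0 < t) :
    RL β (fun x => ∑ i ∈ s, a i * fracKernel (p i) x) t =
      ∑ i ∈ s, a i * fracKernel (p i + β) t := by
  rcases hβ.eq_or_lt' with rfl | hβ
  · simp only [RL_zero, add_zero]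
  rw [RL_eq_posConvolution hβ.ne' _ ht, posConvolution_apply_of_pos ht]
  simp only [Finset.sum_mul, mul_assoc]
  rw [intervalIntegral.integral_finsetSum fun i hi =>
    (intervalIntegrable_fracKernel_mul (hp i hi) hβ ht).const_mul (a i)]
  refine Finset.sum_congr rfl fun i hi => ?_
  rw [intervalIntegral.integral_const_mul, ← posConvolution_apply_of_pos ht,
    fracKernel_posConvolution_fracKernel (hp i hi) hβ ht]

end RL

end FractionalIntegral

section Kernel

variable {f : ℝ → ℝ} {b α β : ℝ}

theorem RL_ae_eq_taylor_iff (hβ₀ : 0 ≤ β) (hβ₁ : β < 1) (n : ℕ) (a : ℕ → ℝ)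
    (hf : IntegrableOn f (Ioo 0 b)) :
    (RL β f =ᵐ[volume.restrict (Ioo 0 b)]
        fun t => ∑ i ∈ Finset.range n, a i / i.factorial * t ^ i) ↔
      f =ᵐ[volume.restrict (Ioo 0 b)]
        fun t => ∑ i ∈ Finset.range n, a i * fracKernel (i + 1 - β) t := by
  have hpos : ∀ i ∈ Finset.range n, 0 < (i : ℝ) + 1 - β := fun i _ => by
    linarith [i.cast_nonneg (α := ℝ)]
  have hRL : RL β (fun t => ∑ i ∈ Finset.range n, a i * fracKernel (i + 1 - β) t)
      =ᵐ[volume.restrict (Ioo 0 b)]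
        fun t => ∑ i ∈ Finset.range n, a i / i.factorial * t ^ i := by
    filter_upwards [ae_restrict_mem measurableSet_Ioo] with t ht
    rw [RL_sum_fracKernel hβ₀ hpos a ht.1]
    simp only [sub_add_cancel, fracKernel_natCast_add_one, mul_div_left_comm, mul_comm]
  have hint : IntegrableOn (fun t => ∑ i ∈ Finset.range n, a i * fracKernel (i + 1 - β) t)
      (Ioo 0 b) :=
    integrable_finsetSum _ fun i hi => (integrableOn_fracKernel (hpos i hi) b).const_mul _
  exact ⟨fun h => ae_eq_of_RL_ae_eq hβ₀ hf hint (h.trans hRL.symm),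
    fun h => (RL_congr_ae β h).trans hRL⟩

theorem isRLDeriv_zero_iff_RL_ae_eq (hb : 0 < b) (hα : 0 < α) :
    IsRLDeriv b α f (fun _ => 0) ↔
      ∃ a : ℕ → ℝ, RL (⌈α⌉₊ - α) f =ᵐ[volume.restrict (Ioo 0 b)]
        fun t => ∑ i ∈ Finset.range ⌈α⌉₊, a i / i.factorial * t ^ i := by
  obtain ⟨m, hm⟩ := Nat.exists_eq_succ_of_ne_zero (Nat.ceil_pos.2 hα).ne'
  simp only [IsRLDeriv, MemACn, hm, Nat.succ_eq_add_one, Nat.add_sub_cancel, hα.ne', false_and,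
    false_or, ne_eq, not_false_eq_true, true_and, integrableOn_zero,
    intervalIntegral.integral_zero, add_zero, ← restrict_Ioo_eq_restrict_Icc]
  constructor
  · rintro ⟨g, hgf, ⟨hg, -⟩, hconst⟩
    refine ⟨fun i => iteratedDerivWithin i g (Icc 0 b) 0, hgf.symm.trans ?_⟩
    filter_upwards [ae_restrict_mem measurableSet_Ioo] with t ht
    rw [eqOn_taylorWithinEval_of_iteratedDerivWithin_eq hb hg hconst (Ioo_subset_Icc_self ht),
      taylor_within_apply]
    refine Finset.sum_congr rfl fun i _ => ?_
    rw [sub_zero, smul_eq_mul]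
    ring
  · rintro ⟨a, ha⟩
    have hconst : ∀ t ∈ Icc 0 b, iteratedDerivWithin m
        (fun t => ∑ i ∈ Finset.range (m + 1), a i / i.factorial * t ^ i) (Icc 0 b) t =
        iteratedDerivWithin m
        (fun t => ∑ i ∈ Finset.range (m + 1), a i / i.factorial * t ^ i) (Icc 0 b) 0 :=
      fun t ht => iteratedDerivWithin_sum_range_succ_eq (uniqueDiffOn_Icc hb) m _ ht
        (left_mem_Icc.2 hb.le)
    refine ⟨_, ha.symm, ⟨by fun_prop, fun _ => 0, integrableOn_zero, ?_⟩, hconst⟩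
    simpa using hconst

theorem sum_rpow_eq_sum_fracKernel (n : ℕ) (α : ℝ) (a : ℕ → ℝ) (t : ℝ) :
    ∑ k ∈ Finset.Icc 1 n, a (n - k) / Real.Gamma (α - k + 1) * t ^ (α - k) =
      ∑ i ∈ Finset.range n, a i * fracKernel (i + 1 - (n - α)) t := by
  have hreflect := Finset.sum_Ico_reflect (fun i => a i * fracKernel (i + 1 - (n - α)) t) 1
    (le_refl (n + 1))
  rw [Nat.sub_self, Nat.add_sub_cancel, ← Finset.range_eq_Ico,
    Finset.Ico_add_one_right_eq_Icc] at hreflect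
  rw [← hreflect]
  refine Finset.sum_congr rfl fun k hk => ?_
  have hexp : ((n - k : ℕ) : ℝ) + 1 - (n - α) = α - k + 1 := by
    rw [Nat.cast_sub (Finset.mem_Icc.1 hk).2]
    ring
  rw [hexp, fracKernel, add_sub_cancel_right]
  ring

theorem exists_ae_eq_sum_fracKernel_iff {n : ℕ} (hn : n < α + 1) {μ : Measure ℝ} :
    (∃ a : ℕ → ℝ, f =ᵐ[μ] fun t => ∑ i ∈ Finset.range n, a i * fracKernel (i + 1 - (n - α)) t) ↔
      ∃ c : ℕ → ℝ, f =ᵐ[μ] fun t => ∑ k ∈ Finset.Icc 1 n, c k * t ^ (α - k) := by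
  simp only [← sum_rpow_eq_sum_fracKernel]
  refine ⟨fun ⟨a, ha⟩ => ⟨_, ha⟩, fun ⟨c, hc⟩ => ?_⟩
  refine ⟨fun i => c (n - i) * Real.Gamma (α - (n - i : ℕ) + 1), ?_⟩
  convert! hc using 5 with t k hk
  have hkn : k ≤ n := (Finset.mem_Icc.1 hk).2
  have hpos : 0 < α - k + 1 := by linarith [(Nat.cast_le (α := ℝ)).2 hkn]
  beta_reduce
  rw [Nat.sub_sub_self hkn, mul_div_cancel_right₀ _ (Real.Gamma_pos_of_pos hpos).ne']

end Kernel

/-- The kernel of `D^α` on `X_α` is exactly the span of `t^{α-⌈α⌉}, …, t^{α-1}`: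
for `f ∈ X_α`, `D^α f = 0` a.e. iff `f` is (a.e.) a linear combination
`∑_{k=1}^{⌈α⌉} c_k t^{α-k}`; moreover these powers are linearly independent in `L¹[0,b]`,
so `ker D^α` has dimension `⌈α⌉`. -/
theorem ker_RLderiv (b : ℝ) (hb : 0 < b) (α : ℝ) (hα : 0 < α) :
    (∀ f : ℝ → ℝ, MemX b α f →
      (IsRLDeriv b α f (fun _ => (0:ℝ)) ↔
        ∃ c : ℕ → ℝ, f =ᵐ[volume.restrict (Set.Icc 0 b)]
          fun t => ∑ k ∈ Finset.Icc 1 ⌈α⌉₊, c k * t ^ (α - (k:ℝ)))) ∧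
    ∀ c : ℕ → ℝ,
      (fun t : ℝ => ∑ k ∈ Finset.Icc 1 ⌈α⌉₊, c k * t ^ (α - (k:ℝ)))
          =ᵐ[volume.restrict (Set.Icc 0 b)] (fun _ => (0:ℝ)) →
      ∀ k ∈ Finset.Icc 1 ⌈α⌉₊, c k = 0 := by
  rw [← restrict_Ioo_eq_restrict_Icc]
  constructor
  · intro f hf
    have hn : (⌈α⌉₊ : ℝ) < α + 1 := Nat.ceil_lt_add_one hα.le
    rw [isRLDeriv_zero_iff_RL_ae_eq hb hα, ← exists_ae_eq_sum_fracKernel_iff hn]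
    exact exists_congr fun a => RL_ae_eq_taylor_iff (sub_nonneg.2 (Nat.le_ceil α))
      (by linarith) _ a (hf.1.mono_set Ioo_subset_Icc_self)
  · intro c hc
    exact coeff_eq_zero_of_sum_rpow_ae_eq_zero hb
      ((sub_right_injective.comp Nat.cast_injective).injOn) hc
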